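/- Let S be a plain SHACL shapes graph and α a sequence of basic ground actions, each of one of the forms (B ⊕← φ), (B ⊖← φ), or (p ⊕← E), where φ is a shape-name-free plain SHACL shape expression and E a plain SHACL path expression. Then the transformed shapes graph tr_α(S) contains no path-difference operator ∖ and no shape properties (φ₁,φ₂); that is, every path expression occurring in tr_α(S) is a plain SHACL path expression, and every shape expression occurring in tr_α(S) is a plain SHACL shape expression. -/

import Mathlib

/-!
Plainness is a structural property: an expression is plain when none of its path subexpressions is
a difference or a shape property. Substituting a plain shape for a class name, or a plain path for
a property name, in a plain expression therefore gives a plain expression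
(`Shape.plain_substCls`, `Shape.plain_substProp`). Under an inverse `p⁻` the substituted path is
inverted structurally, which also keeps it plain (`SPath.plain_inverse`). The expressions
`B ∨ φ`, `B ∧ ¬φ` and `p ∪ E` substituted by the three admitted kinds of basic actions are plain
when `φ` and `E` are; only `(p ⊖← E)` introduces a difference. Induction on the sequence of
actions then gives the theorem.
-/

set_option maxHeartbeats 1000000

/-! ### Basic vocabularies: mutually disjoint countably infinite sets -/

structure Node where
  id : ℕ
deriving DecidableEq

structure ClassName where
  id : ℕ
deriving DecidableEq

structure PropName where
  id : ℕ
deriving DecidableEq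

structure ShapeName where
  id : ℕ
deriving DecidableEq

structure Var where
  id : ℕ
deriving DecidableEq

/-! ### RDF data graphs -/

inductive Atom where
  | cls : ClassName → Node → Atom
  | prop : PropName → Node → Node → Atom
deriving DecidableEq

def Atom.nodeSet : Atom → Set Node
  | .cls _ a => {a}
  | .prop _ a b => {a, b}

/-- the nodes `V(G)` occurring in a set of atoms -/
def graphNodes (G : Set Atom) : Set Node := ⋃ t ∈ G, t.nodeSet

/-! ### Syntax of SHACL⁺ shape and path expressions (nodes drawn from `ν`) -/

mutual
inductive Shape (ν : Type) where
  | top : Shape ν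
  | name : ShapeName → Shape ν
  | cls : ClassName → Shape ν
  | const : ν → Shape ν
  | and : Shape ν → Shape ν → Shape ν
  | not : Shape ν → Shape ν
  | geq : ℕ → SPath ν → Shape ν → Shape ν
  | eq : SPath ν → PropName → Shape ν
  | disj : SPath ν → PropName → Shape ν
  | closed : Finset PropName → Shape ν

inductive SPath (ν : Type) where
  | prop : PropName → SPath ν
  | inv : PropName → SPath ν
  | shapes : Shape ν → Shape ν → SPath ν
  | comp : SPath ν → SPath ν → SPath ν
  | union : SPath ν → SPath ν → SPath ν
  | star : SPath ν → SPath ν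
  | diff : SPath ν → SPath ν → SPath ν
end

/-- the abbreviation `φ ∨ ψ := ¬(¬φ ∧ ¬ψ)` -/
def Shape.or {ν : Type} (φ ψ : Shape ν) : Shape ν := .not (.and (.not φ) (.not ψ))

/-! ### Semantics: assignments and evaluation -/

/-- An assignment `I = G ∪ L` for a data graph `G`: a labelling of nodes of `V(G)`
by shape names. -/
structure Assignment where
  graph : Set Atom
  label : ShapeName → Node → Prop
  label_mem : ∀ s a, label s a → a ∈ graphNodes graph

mutual
def evalShape (I : Assignment) : Shape Node → Set Node
  | .top => graphNodes I.graph
  | .name s => {a | I.label s a}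
  | .cls B => {a | Atom.cls B a ∈ I.graph}
  | .const c => {c}
  | .and φ ψ => evalShape I φ ∩ evalShape I ψ
  | .not φ => graphNodes I.graph \ evalShape I φ
  | .geq n E φ => {c | n ≤ Set.ncard {d | (c, d) ∈ evalPath I E ∧ d ∈ evalShape I φ}}
  | .eq E p => {c | ∀ d, (c, d) ∈ evalPath I E ↔ Atom.prop p c d ∈ I.graph}
  | .disj E p => {c | ¬ ∃ d, (c, d) ∈ evalPath I E ∧ Atom.prop p c d ∈ I.graph}
  | .closed P => {c | ∀ p, p ∉ P → ∀ d, Atom.prop p c d ∉ I.graph}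

def evalPath (I : Assignment) : SPath Node → Set (Node × Node)
  | .prop p => {x | Atom.prop p x.1 x.2 ∈ I.graph}
  | .inv p => {x | Atom.prop p x.2 x.1 ∈ I.graph}
  | .shapes φ ψ => (evalShape I φ) ×ˢ (evalShape I ψ)
  | .comp E F => {x | ∃ d, (x.1, d) ∈ evalPath I E ∧ (d, x.2) ∈ evalPath I F}
  | .union E F => evalPath I E ∪ evalPath I F
  | .star E => {x | x.1 ∈ graphNodes I.graph ∧
      Relation.ReflTransGen (fun a b => (a, b) ∈ evalPath I E) x.1 x.2}
  | .diff E F => evalPath I E \ evalPath I F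
end

/-- the assignment with empty labelling, used to evaluate shape-name-free
expressions directly over a data graph `G` -/
def Assignment.ofGraph (G : Set Atom) : Assignment :=
  ⟨G, fun _ _ => False, fun _ _ h => h.elim⟩
/-! ### Syntactic occurrence lists -/

mutual
def Shape.shapeNameList {ν : Type} : Shape ν → List ShapeName
  | .top => []
  | .name s => [s]
  | .cls _ => []
  | .const _ => []
  | .and φ ψ => φ.shapeNameList ++ ψ.shapeNameList
  | .not φ => φ.shapeNameList
  | .geq _ E φ => E.shapeNameList ++ φ.shapeNameList
  | .eq E _ => E.shapeNameList
  | .disj E _ => E.shapeNameList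
  | .closed _ => []

def SPath.shapeNameList {ν : Type} : SPath ν → List ShapeName
  | .prop _ => []
  | .inv _ => []
  | .shapes φ ψ => φ.shapeNameList ++ ψ.shapeNameList
  | .comp E F => E.shapeNameList ++ F.shapeNameList
  | .union E F => E.shapeNameList ++ F.shapeNameList
  | .star E => E.shapeNameList
  | .diff E F => E.shapeNameList ++ F.shapeNameList
end

/-- a shape expression is *shape-name free* if no shape name occurs in it -/
def Shape.nameFree {ν : Type} (φ : Shape ν) : Prop := φ.shapeNameList = []

def SPath.nameFree {ν : Type} (E : SPath ν) : Prop := E.shapeNameList = []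

mutual
def Shape.clsList {ν : Type} : Shape ν → List ClassName
  | .top => []
  | .name _ => []
  | .cls B => [B]
  | .const _ => []
  | .and φ ψ => φ.clsList ++ ψ.clsList
  | .not φ => φ.clsList
  | .geq _ E φ => E.clsList ++ φ.clsList
  | .eq E _ => E.clsList
  | .disj E _ => E.clsList
  | .closed _ => []

def SPath.clsList {ν : Type} : SPath ν → List ClassName
  | .prop _ => []
  | .inv _ => []
  | .shapes φ ψ => φ.clsList ++ ψ.clsList
  | .comp E F => E.clsList ++ F.clsList
  | .union E F => E.clsList ++ F.clsList
  | .star E => E.clsList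
  | .diff E F => E.clsList ++ F.clsList
end

mutual
def Shape.nodeList {ν : Type} : Shape ν → List ν
  | .top => []
  | .name _ => []
  | .cls _ => []
  | .const c => [c]
  | .and φ ψ => φ.nodeList ++ ψ.nodeList
  | .not φ => φ.nodeList
  | .geq _ E φ => E.nodeList ++ φ.nodeList
  | .eq E _ => E.nodeList
  | .disj E _ => E.nodeList
  | .closed _ => []

def SPath.nodeList {ν : Type} : SPath ν → List ν
  | .prop _ => []
  | .inv _ => []
  | .shapes φ ψ => φ.nodeList ++ ψ.nodeList
  | .comp E F => E.nodeList ++ F.nodeList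
  | .union E F => E.nodeList ++ F.nodeList
  | .star E => E.nodeList
  | .diff E F => E.nodeList ++ F.nodeList
end

/-! ### Renaming of nodes / instantiating variables -/

mutual
def Shape.mapNodes {ν ν' : Type} (f : ν → ν') : Shape ν → Shape ν'
  | .top => .top
  | .name s => .name s
  | .cls B => .cls B
  | .const c => .const (f c)
  | .and φ ψ => .and (φ.mapNodes f) (ψ.mapNodes f)
  | .not φ => .not (φ.mapNodes f)
  | .geq n E φ => .geq n (E.mapNodes f) (φ.mapNodes f)
  | .eq E p => .eq (E.mapNodes f) p
  | .disj E p => .disj (E.mapNodes f) p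
  | .closed P => .closed P

def SPath.mapNodes {ν ν' : Type} (f : ν → ν') : SPath ν → SPath ν'
  | .prop p => .prop p
  | .inv p => .inv p
  | .shapes φ ψ => .shapes (φ.mapNodes f) (ψ.mapNodes f)
  | .comp E F => .comp (E.mapNodes f) (F.mapNodes f)
  | .union E F => .union (E.mapNodes f) (F.mapNodes f)
  | .star E => .star (E.mapNodes f)
  | .diff E F => .diff (E.mapNodes f) (F.mapNodes f)
end

/-! ### Plain SHACL (no path difference, no shape properties) -/

mutual
def Shape.plain {ν : Type} : Shape ν → Prop
  | .top => True
  | .name _ => True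
  | .cls _ => True
  | .const _ => True
  | .and φ ψ => φ.plain ∧ ψ.plain
  | .not φ => φ.plain
  | .geq _ E φ => E.plain ∧ φ.plain
  | .eq E _ => E.plain
  | .disj E _ => E.plain
  | .closed _ => True

def SPath.plain {ν : Type} : SPath ν → Prop
  | .prop _ => True
  | .inv _ => True
  | .shapes _ _ => False
  | .comp E F => E.plain ∧ F.plain
  | .union E F => E.plain ∧ F.plain
  | .star E => E.plain
  | .diff _ _ => False
end

/-! ### Size (number of symbols) -/

mutual
def Shape.size {ν : Type} : Shape ν → ℕ
  | .top => 1
  | .name _ => 1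
  | .cls _ => 1
  | .const _ => 1
  | .and φ ψ => 1 + φ.size + ψ.size
  | .not φ => 1 + φ.size
  | .geq _ E φ => 1 + E.size + φ.size
  | .eq E _ => 1 + E.size
  | .disj E _ => 1 + E.size
  | .closed P => 1 + P.card

def SPath.size {ν : Type} : SPath ν → ℕ
  | .prop _ => 1
  | .inv _ => 1
  | .shapes φ ψ => 1 + φ.size + ψ.size
  | .comp E F => 1 + E.size + F.size
  | .union E F => 1 + E.size + F.size
  | .star E => 1 + E.size
  | .diff E F => 1 + E.size + F.size
end

/-! ### Substitution of class names and property names -/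

mutual
def Shape.substCls {ν : Type} (B : ClassName) : Shape ν → Shape ν → Shape ν
  | .top, _ => .top
  | .name s, _ => .name s
  | .cls B', ψ => if B' = B then ψ else .cls B'
  | .const c, _ => .const c
  | .and φ₁ φ₂, ψ => .and (φ₁.substCls B ψ) (φ₂.substCls B ψ)
  | .not φ, ψ => .not (φ.substCls B ψ)
  | .geq n E φ, ψ => .geq n (E.substCls B ψ) (φ.substCls B ψ)
  | .eq E p, ψ => .eq (E.substCls B ψ) p
  | .disj E p, ψ => .disj (E.substCls B ψ) p
  | .closed P, _ => .closed P
  termination_by φ _ => sizeOf φ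

def SPath.substCls {ν : Type} (B : ClassName) : SPath ν → Shape ν → SPath ν
  | .prop p, _ => .prop p
  | .inv p, _ => .inv p
  | .shapes φ₁ φ₂, ψ => .shapes (φ₁.substCls B ψ) (φ₂.substCls B ψ)
  | .comp E F, ψ => .comp (E.substCls B ψ) (F.substCls B ψ)
  | .union E F, ψ => .union (E.substCls B ψ) (F.substCls B ψ)
  | .star E, ψ => .star (E.substCls B ψ)
  | .diff E F, ψ => .diff (E.substCls B ψ) (F.substCls B ψ)
  termination_by E _ => sizeOf E
end

/-- the structural inverse of a path expression, used when substituting a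
property name `p` inside an inverse `p⁻` -/
def SPath.inverse {ν : Type} : SPath ν → SPath ν
  | .prop p => .inv p
  | .inv p => .prop p
  | .shapes φ ψ => .shapes ψ φ
  | .comp E F => .comp F.inverse E.inverse
  | .union E F => .union E.inverse F.inverse
  | .star E => .star E.inverse
  | .diff E F => .diff E.inverse F.inverse

mutual
def Shape.substProp {ν : Type} (p : PropName) : Shape ν → SPath ν → Shape ν
  | .top, _ => .top
  | .name s, _ => .name s
  | .cls B, _ => .cls B
  | .const c, _ => .const c
  | .and φ₁ φ₂, E' => .and (φ₁.substProp p E') (φ₂.substProp p E')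
  | .not φ, E' => .not (φ.substProp p E')
  | .geq n E φ, E' => .geq n (E.substProp p E') (φ.substProp p E')
  | .eq E q, E' => .eq (E.substProp p E') q
  | .disj E q, E' => .disj (E.substProp p E') q
  | .closed P, _ => .closed P
  termination_by φ _ => sizeOf φ

def SPath.substProp {ν : Type} (p : PropName) : SPath ν → SPath ν → SPath ν
  | .prop q, E' => if q = p then E' else .prop q
  | .inv q, E' => if q = p then E'.inverse else .inv q
  | .shapes φ₁ φ₂, E' => .shapes (φ₁.substProp p E') (φ₂.substProp p E')
  | .comp E F, E' => .comp (E.substProp p E') (F.substProp p E')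
  | .union E F, E' => .union (E.substProp p E') (F.substProp p E')
  | .star E, E' => .star (E.substProp p E')
  | .diff E F, E' => .diff (E.substProp p E') (F.substProp p E')
  termination_by E _ => sizeOf E
end
/-! ### Constraints, targets and shapes graphs -/

/-- a shape constraint `s ↔ φ` -/
structure Constraint (ν : Type) where
  name : ShapeName
  body : Shape ν

/-- a Boolean combination of target expressions `(φ, s)` -/
inductive Target (ν : Type) where
  | expr : Shape ν → ShapeName → Target ν
  | and : Target ν → Target ν → Target ν
  | or : Target ν → Target ν → Target ν
  | not : Target ν → Target ν

/-- a normal shapes graph `(C, T)` -/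
structure NormalSG (ν : Type) where
  constraints : List (Constraint ν)
  target : Target ν

/-- a SHACL⁺ shapes graph: a Boolean combination of normal shapes graphs -/
inductive SG (ν : Type) where
  | normal : NormalSG ν → SG ν
  | and : SG ν → SG ν → SG ν
  | or : SG ν → SG ν → SG ν
  | not : SG ν → SG ν

/-! #### Lifted syntactic operations -/

def Constraint.substCls {ν : Type} (B : ClassName) (ψ : Shape ν) (c : Constraint ν) :
    Constraint ν := ⟨c.name, c.body.substCls B ψ⟩

def Constraint.substProp {ν : Type} (p : PropName) (E' : SPath ν) (c : Constraint ν) :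
    Constraint ν := ⟨c.name, c.body.substProp p E'⟩

def Target.substCls {ν : Type} (B : ClassName) (ψ : Shape ν) : Target ν → Target ν
  | .expr φ s => .expr (φ.substCls B ψ) s
  | .and t u => .and (t.substCls B ψ) (u.substCls B ψ)
  | .or t u => .or (t.substCls B ψ) (u.substCls B ψ)
  | .not t => .not (t.substCls B ψ)

def Target.substProp {ν : Type} (p : PropName) (E' : SPath ν) : Target ν → Target ν
  | .expr φ s => .expr (φ.substProp p E') s
  | .and t u => .and (t.substProp p E') (u.substProp p E')
  | .or t u => .or (t.substProp p E') (u.substProp p E')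
  | .not t => .not (t.substProp p E')

def NormalSG.substCls {ν : Type} (B : ClassName) (ψ : Shape ν) (N : NormalSG ν) :
    NormalSG ν := ⟨N.constraints.map (Constraint.substCls B ψ), N.target.substCls B ψ⟩

def NormalSG.substProp {ν : Type} (p : PropName) (E' : SPath ν) (N : NormalSG ν) :
    NormalSG ν := ⟨N.constraints.map (Constraint.substProp p E'), N.target.substProp p E'⟩

def SG.substCls {ν : Type} (B : ClassName) (ψ : Shape ν) : SG ν → SG ν
  | .normal N => .normal (N.substCls B ψ)
  | .and S T => .and (S.substCls B ψ) (T.substCls B ψ)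
  | .or S T => .or (S.substCls B ψ) (T.substCls B ψ)
  | .not S => .not (S.substCls B ψ)

def SG.substProp {ν : Type} (p : PropName) (E' : SPath ν) : SG ν → SG ν
  | .normal N => .normal (N.substProp p E')
  | .and S T => .and (S.substProp p E') (T.substProp p E')
  | .or S T => .or (S.substProp p E') (T.substProp p E')
  | .not S => .not (S.substProp p E')

def Target.names {ν : Type} : Target ν → List ShapeName
  | .expr φ s => φ.shapeNameList ++ [s]
  | .and t u => t.names ++ u.names
  | .or t u => t.names ++ u.names
  | .not t => t.names

def Target.nodeList {ν : Type} : Target ν → List ν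
  | .expr φ _ => φ.nodeList
  | .and t u => t.nodeList ++ u.nodeList
  | .or t u => t.nodeList ++ u.nodeList
  | .not t => t.nodeList

def Target.clsList {ν : Type} : Target ν → List ClassName
  | .expr φ _ => φ.clsList
  | .and t u => t.clsList ++ u.clsList
  | .or t u => t.clsList ++ u.clsList
  | .not t => t.clsList

def NormalSG.nodeList {ν : Type} (N : NormalSG ν) : List ν :=
  N.constraints.flatMap (fun c => c.body.nodeList) ++ N.target.nodeList

def NormalSG.clsList {ν : Type} (N : NormalSG ν) : List ClassName :=
  N.constraints.flatMap (fun c => c.body.clsList) ++ N.target.clsList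

def SG.nodeList {ν : Type} : SG ν → List ν
  | .normal N => N.nodeList
  | .and S T => S.nodeList ++ T.nodeList
  | .or S T => S.nodeList ++ T.nodeList
  | .not S => S.nodeList

def SG.clsList {ν : Type} : SG ν → List ClassName
  | .normal N => N.clsList
  | .and S T => S.clsList ++ T.clsList
  | .or S T => S.clsList ++ T.clsList
  | .not S => S.clsList

def Constraint.mapNodes {ν ν' : Type} (f : ν → ν') (c : Constraint ν) : Constraint ν' :=
  ⟨c.name, c.body.mapNodes f⟩

def Target.mapNodes {ν ν' : Type} (f : ν → ν') : Target ν → Target ν'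
  | .expr φ s => .expr (φ.mapNodes f) s
  | .and t u => .and (t.mapNodes f) (u.mapNodes f)
  | .or t u => .or (t.mapNodes f) (u.mapNodes f)
  | .not t => .not (t.mapNodes f)

def NormalSG.mapNodes {ν ν' : Type} (f : ν → ν') (N : NormalSG ν) : NormalSG ν' :=
  ⟨N.constraints.map (Constraint.mapNodes f), N.target.mapNodes f⟩

def SG.mapNodes {ν ν' : Type} (f : ν → ν') : SG ν → SG ν'
  | .normal N => .normal (N.mapNodes f)
  | .and S T => .and (S.mapNodes f) (T.mapNodes f)
  | .or S T => .or (S.mapNodes f) (T.mapNodes f)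
  | .not S => .not (S.mapNodes f)

def Target.plain {ν : Type} : Target ν → Prop
  | .expr φ _ => φ.plain
  | .and t u => t.plain ∧ u.plain
  | .or t u => t.plain ∧ u.plain
  | .not t => t.plain

def NormalSG.plain {ν : Type} (N : NormalSG ν) : Prop :=
  (∀ c ∈ N.constraints, c.body.plain) ∧ N.target.plain

def SG.plain {ν : Type} : SG ν → Prop
  | .normal N => N.plain
  | .and S T => S.plain ∧ T.plain
  | .or S T => S.plain ∧ T.plain
  | .not S => S.plain

def Target.size {ν : Type} : Target ν → ℕ
  | .expr φ _ => 1 + φ.size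
  | .and t u => 1 + t.size + u.size
  | .or t u => 1 + t.size + u.size
  | .not t => 1 + t.size

def NormalSG.size {ν : Type} (N : NormalSG ν) : ℕ :=
  (N.constraints.map (fun c => 1 + c.body.size)).sum + N.target.size

def SG.size {ν : Type} : SG ν → ℕ
  | .normal N => N.size
  | .and S T => 1 + S.size + T.size
  | .or S T => 1 + S.size + T.size
  | .not S => 1 + S.size

/-! #### Well-formedness of shapes graphs -/

/-- `s` (directly) refers to `t` through the constraints `C` -/
def dependsOn {ν : Type} (C : List (Constraint ν)) (s t : ShapeName) : Prop :=
  ∃ c ∈ C, c.name = s ∧ t ∈ c.body.shapeNameList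

/-- no shape name directly or indirectly refers to itself -/
def NonRecursive {ν : Type} (C : List (Constraint ν)) : Prop :=
  ∀ s, ¬ Relation.TransGen (dependsOn C) s s

def Target.WF {ν : Type} : Target ν → Prop
  | .expr φ _ => φ.nameFree
  | .and t u => t.WF ∧ u.WF
  | .or t u => t.WF ∧ u.WF
  | .not t => t.WF

/-- a normal shapes graph is well-formed if its constraints are non-recursive and
define each shape name occurring in them exactly once, the shapes in target
expressions are shape-name free, and each targeted shape name is defined -/
def NormalSG.WF {ν : Type} (N : NormalSG ν) : Prop :=
  (N.constraints.map Constraint.name).Nodup ∧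
  NonRecursive N.constraints ∧
  (∀ c ∈ N.constraints, ∀ t ∈ c.body.shapeNameList, t ∈ N.constraints.map Constraint.name) ∧
  N.target.WF ∧
  (∀ s ∈ N.target.names, s ∈ N.constraints.map Constraint.name)

def SG.WF {ν : Type} : SG ν → Prop
  | .normal N => N.WF
  | .and S T => S.WF ∧ T.WF
  | .or S T => S.WF ∧ T.WF
  | .not S => S.WF

/-! #### Validation -/

def Assignment.modelsConstraint (I : Assignment) (c : Constraint Node) : Prop :=
  {a | I.label c.name a} = evalShape I c.body

def Assignment.modelsTarget (I : Assignment) : Target Node → Prop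
  | .expr φ s => evalShape I φ ⊆ {a | I.label s a}
  | .and t u => I.modelsTarget t ∧ I.modelsTarget u
  | .or t u => I.modelsTarget t ∨ I.modelsTarget u
  | .not t => ¬ I.modelsTarget t

/-- `G` validates the normal shapes graph `(C,T)`: some assignment for `G` is a
model of all constraints and of the target -/
def validatesNormal (G : Set Atom) (N : NormalSG Node) : Prop :=
  ∃ I : Assignment, I.graph = G ∧ (∀ c ∈ N.constraints, I.modelsConstraint c) ∧
    I.modelsTarget N.target

/-- validation of Boolean combinations of shapes graphs -/
def validates (G : Set Atom) : SG Node → Prop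
  | .normal N => validatesNormal G N
  | .and S T => validates G S ∧ validates G T
  | .or S T => validates G S ∨ validates G T
  | .not S => ¬ validates G S

/-- a shapes graph is satisfiable if some (finite) data graph validates it -/
def SGSat (S : SG Node) : Prop := ∃ G : Set Atom, G.Finite ∧ validates G S
/-! ### Update actions -/

/-- basic actions `(B ⊕← φ)`, `(B ⊖← φ)`, `(p ⊕← E)`, `(p ⊖← E)` -/
inductive BasicAction (ν : Type) where
  | addCls : ClassName → Shape ν → BasicAction ν
  | delCls : ClassName → Shape ν → BasicAction ν
  | addProp : PropName → SPath ν → BasicAction ν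
  | delProp : PropName → SPath ν → BasicAction ν

/-- complex actions `∅`, `β·α` and `(S'?α₁[α₂])·α` -/
inductive UAction (ν : Type) where
  | nil : UAction ν
  | seq : BasicAction ν → UAction ν → UAction ν
  | cond : SG ν → UAction ν → UAction ν → UAction ν → UAction ν

/-- well-formedness: the shapes used in basic actions are shape-name free and the
shapes graphs used as preconditions are well-formed -/
def BasicAction.WF {ν : Type} : BasicAction ν → Prop
  | .addCls _ φ => φ.nameFree
  | .delCls _ φ => φ.nameFree
  | .addProp _ E => E.nameFree
  | .delProp _ E => E.nameFree

def UAction.WF {ν : Type} : UAction ν → Prop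
  | .nil => True
  | .seq β α => β.WF ∧ α.WF
  | .cond S a₁ a₂ rest => S.WF ∧ a₁.WF ∧ a₂.WF ∧ rest.WF

def BasicAction.plain {ν : Type} : BasicAction ν → Prop
  | .addCls _ φ => φ.plain
  | .delCls _ φ => φ.plain
  | .addProp _ E => E.plain
  | .delProp _ E => E.plain

def BasicAction.nodeList {ν : Type} : BasicAction ν → List ν
  | .addCls _ φ => φ.nodeList
  | .delCls _ φ => φ.nodeList
  | .addProp _ E => E.nodeList
  | .delProp _ E => E.nodeList

def UAction.nodeList {ν : Type} : UAction ν → List ν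
  | .nil => []
  | .seq β α => β.nodeList ++ α.nodeList
  | .cond S a₁ a₂ rest => S.nodeList ++ a₁.nodeList ++ a₂.nodeList ++ rest.nodeList

def BasicAction.mapNodes {ν ν' : Type} (f : ν → ν') : BasicAction ν → BasicAction ν'
  | .addCls B φ => .addCls B (φ.mapNodes f)
  | .delCls B φ => .delCls B (φ.mapNodes f)
  | .addProp p E => .addProp p (E.mapNodes f)
  | .delProp p E => .delProp p (E.mapNodes f)

def UAction.mapNodes {ν ν' : Type} (f : ν → ν') : UAction ν → UAction ν'
  | .nil => .nil
  | .seq β α => .seq (β.mapNodes f) (α.mapNodes f)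
  | .cond S a₁ a₂ rest =>
      .cond (S.mapNodes f) (a₁.mapNodes f) (a₂.mapNodes f) (rest.mapNodes f)

/-- the length `l(α)` of a complex action -/
def UAction.size {ν : Type} : UAction ν → ℕ
  | .nil => 0
  | .seq _ α => 1 + α.size
  | .cond _ a₁ a₂ rest => 1 + a₁.size + a₂.size + rest.size

/-- composition (concatenation) of complex actions -/
def UAction.comp {ν : Type} : UAction ν → UAction ν → UAction ν
  | .nil, b => b
  | .seq β a, b => .seq β (a.comp b)
  | .cond S a₁ a₂ rest, b => .cond S a₁ a₂ (rest.comp b)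

theorem UAction.size_comp {ν : Type} (a b : UAction ν) :
    (a.comp b).size = a.size + b.size := by
  induction a with
  | nil => simp [UAction.comp, UAction.size]
  | seq β a ih => simp only [UAction.comp, UAction.size, ih]; omega
  | cond S a₁ a₂ rest ih₁ ih₂ ih₃ => simp only [UAction.comp, UAction.size, ih₃]; omega

/-- a sequence of basic actions, as a complex action -/
def UAction.ofList {ν : Type} (l : List (BasicAction ν)) : UAction ν :=
  l.foldr UAction.seq UAction.nil

/-! ### The update `up(G, α)` -/

/-- the effect of a basic ground action on a data graph -/
def upBasic (G : Set Atom) : BasicAction Node → Set Atom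
  | .addCls B φ => G ∪ {t | ∃ a ∈ evalShape (Assignment.ofGraph G) φ, t = Atom.cls B a}
  | .delCls B φ => G \ {t | ∃ a ∈ evalShape (Assignment.ofGraph G) φ, t = Atom.cls B a}
  | .addProp p E => G ∪ {t | ∃ x ∈ evalPath (Assignment.ofGraph G) E, t = Atom.prop p x.1 x.2}
  | .delProp p E => G \ {t | ∃ x ∈ evalPath (Assignment.ofGraph G) E, t = Atom.prop p x.1 x.2}

/-- the result of applying a ground complex action to a data graph -/
noncomputable def up : Set Atom → UAction Node → Set Atom
  | G, .nil => G
  | G, .seq β α => up (upBasic G β) α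
  | G, .cond S a₁ a₂ rest =>
      @ite _ (validates G S) (Classical.propDecidable _)
        (up G (a₁.comp rest)) (up G (a₂.comp rest))
termination_by _ α => α.size
decreasing_by
  · simp only [UAction.size]; omega
  · simp only [UAction.size_comp, UAction.size]; omega
  · simp only [UAction.size_comp, UAction.size]; omega

/-! ### The regression transformation `tr_α(S)` -/

/-- the substitution on a shapes graph capturing the effect of one basic action -/
def SG.applyBasic {ν : Type} (S : SG ν) : BasicAction ν → SG ν
  | .addCls B φ => S.substCls B (Shape.or (.cls B) φ)
  | .delCls B φ => S.substCls B (Shape.and (.cls B) (Shape.not φ))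
  | .addProp p E => S.substProp p (SPath.union (.prop p) E)
  | .delProp p E => S.substProp p (SPath.diff (.prop p) E)

/-- the regression `tr_α(S)` of a shapes graph w.r.t. a ground complex action -/
def tr {ν : Type} : UAction ν → SG ν → SG ν
  | .nil, S => S
  | .seq β α, S => (tr α S).applyBasic β
  | .cond S' a₁ a₂ rest, S =>
      .and (.or (.not S') (tr (a₁.comp rest) S)) (.or S' (tr (a₂.comp rest) S))
termination_by α _ => α.size
decreasing_by
  · simp only [UAction.size]; omega
  · simp only [UAction.size_comp, UAction.size]; omega
  · simp only [UAction.size_comp, UAction.size]; omega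

/-! ### Static validation under updates -/

/-- `α` (an action possibly containing variables) is `S`-preserving: every ground
instance of `α` maps every data graph validating `S` to one validating `S` -/
def Preserving (S : SG Node) (α : UAction (Node ⊕ Var)) : Prop :=
  ∀ σ : Var → Node, ∀ G : Set Atom, G.Finite → validates G S →
    validates (up G (α.mapNodes (Sum.elim id σ))) S

/-! ### Shapes graphs whose target is given as a set (list) of target expressions -/

/-- `G` validates the shapes graph `(C, T)` where `T` is a set of target
expressions `(φ, s)` -/
def validatesL (G : Set Atom) (C : List (Constraint Node))
    (T : List (Shape Node × ShapeName)) : Prop :=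
  ∃ I : Assignment, I.graph = G ∧ (∀ c ∈ C, I.modelsConstraint c) ∧
    ∀ t ∈ T, evalShape I t.1 ⊆ {a | I.label t.2 a}

/-- validation where, in addition, every node appearing in the shapes graph is
required to appear in the data graph -/
def validatesPlain (G : Set Atom) (C : List (Constraint Node))
    (T : List (Shape Node × ShapeName)) : Prop :=
  (∀ a : Node, ((∃ c ∈ C, a ∈ c.body.nodeList) ∨ (∃ t ∈ T, a ∈ (t.1).nodeList)) →
    a ∈ graphNodes G) ∧
  validatesL G C T

/-- the regression transformation on a set of constraints, for a sequence of
basic actions (applied from left to right) -/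
def Constraint.applyBasic {ν : Type} (c : Constraint ν) : BasicAction ν → Constraint ν
  | .addCls B φ => ⟨c.name, c.body.substCls B (Shape.or (.cls B) φ)⟩
  | .delCls B φ => ⟨c.name, c.body.substCls B (Shape.and (.cls B) (Shape.not φ))⟩
  | .addProp p E => ⟨c.name, c.body.substProp p (SPath.union (.prop p) E)⟩
  | .delProp p E => ⟨c.name, c.body.substProp p (SPath.diff (.prop p) E)⟩

def trC {ν : Type} : List (BasicAction ν) → List (Constraint ν) → List (Constraint ν)
  | [], C => C
  | β :: rest, C => (trC rest C).map (fun c => c.applyBasic β)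

/-! ### Plainness is preserved by substitution -/

theorem SPath.plain_inverse {ν : Type} :
    ∀ E : SPath ν, E.plain → E.inverse.plain
  | .prop _, _ => by simp [SPath.inverse, SPath.plain]
  | .inv _, _ => by simp [SPath.inverse, SPath.plain]
  | .shapes _ _, h => by simp [SPath.plain] at h
  | .comp E F, h => by
      simp only [SPath.inverse, SPath.plain] at h ⊢
      exact ⟨SPath.plain_inverse F h.2, SPath.plain_inverse E h.1⟩
  | .union E F, h => by
      simp only [SPath.inverse, SPath.plain] at h ⊢
      exact ⟨SPath.plain_inverse E h.1, SPath.plain_inverse F h.2⟩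
  | .star E, h => by
      simp only [SPath.inverse, SPath.plain] at h ⊢
      exact SPath.plain_inverse E h
  | .diff _ _, h => by simp [SPath.plain] at h

mutual
theorem Shape.plain_substCls {ν : Type} (B : ClassName) (ψ : Shape ν) (hψ : ψ.plain) :
    ∀ φ : Shape ν, φ.plain → (φ.substCls B ψ).plain
  | .top, _ => by simp [Shape.substCls, Shape.plain]
  | .name _, _ => by simp [Shape.substCls, Shape.plain]
  | .cls B', _ => by
      simp only [Shape.substCls]
      split
      · exact hψ
      · simp [Shape.plain]
  | .const _, _ => by simp [Shape.substCls, Shape.plain]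
  | .and φ₁ φ₂, h => by
      simp only [Shape.substCls, Shape.plain] at h ⊢
      exact ⟨Shape.plain_substCls B ψ hψ φ₁ h.1, Shape.plain_substCls B ψ hψ φ₂ h.2⟩
  | .not φ, h => by
      simp only [Shape.substCls, Shape.plain] at h ⊢
      exact Shape.plain_substCls B ψ hψ φ h
  | .geq _ E φ, h => by
      simp only [Shape.substCls, Shape.plain] at h ⊢
      exact ⟨SPath.plain_substCls B ψ hψ E h.1, Shape.plain_substCls B ψ hψ φ h.2⟩
  | .eq E _, h => by
      simp only [Shape.substCls, Shape.plain] at h ⊢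
      exact SPath.plain_substCls B ψ hψ E h
  | .disj E _, h => by
      simp only [Shape.substCls, Shape.plain] at h ⊢
      exact SPath.plain_substCls B ψ hψ E h
  | .closed _, _ => by simp [Shape.substCls, Shape.plain]

theorem SPath.plain_substCls {ν : Type} (B : ClassName) (ψ : Shape ν) (hψ : ψ.plain) :
    ∀ E : SPath ν, E.plain → (E.substCls B ψ).plain
  | .prop _, _ => by simp [SPath.substCls, SPath.plain]
  | .inv _, _ => by simp [SPath.substCls, SPath.plain]
  | .shapes _ _, h => by simp [SPath.plain] at h
  | .comp E F, h => by
      simp only [SPath.substCls, SPath.plain] at h ⊢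
      exact ⟨SPath.plain_substCls B ψ hψ E h.1, SPath.plain_substCls B ψ hψ F h.2⟩
  | .union E F, h => by
      simp only [SPath.substCls, SPath.plain] at h ⊢
      exact ⟨SPath.plain_substCls B ψ hψ E h.1, SPath.plain_substCls B ψ hψ F h.2⟩
  | .star E, h => by
      simp only [SPath.substCls, SPath.plain] at h ⊢
      exact SPath.plain_substCls B ψ hψ E h
  | .diff _ _, h => by simp [SPath.plain] at h
end

mutual
theorem Shape.plain_substProp {ν : Type} (p : PropName) (E' : SPath ν) (hE' : E'.plain) :
    ∀ φ : Shape ν, φ.plain → (φ.substProp p E').plain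
  | .top, _ => by simp [Shape.substProp, Shape.plain]
  | .name _, _ => by simp [Shape.substProp, Shape.plain]
  | .cls _, _ => by simp [Shape.substProp, Shape.plain]
  | .const _, _ => by simp [Shape.substProp, Shape.plain]
  | .and φ₁ φ₂, h => by
      simp only [Shape.substProp, Shape.plain] at h ⊢
      exact ⟨Shape.plain_substProp p E' hE' φ₁ h.1, Shape.plain_substProp p E' hE' φ₂ h.2⟩
  | .not φ, h => by
      simp only [Shape.substProp, Shape.plain] at h ⊢
      exact Shape.plain_substProp p E' hE' φ h
  | .geq _ E φ, h => by
      simp only [Shape.substProp, Shape.plain] at h ⊢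
      exact ⟨SPath.plain_substProp p E' hE' E h.1, Shape.plain_substProp p E' hE' φ h.2⟩
  | .eq E _, h => by
      simp only [Shape.substProp, Shape.plain] at h ⊢
      exact SPath.plain_substProp p E' hE' E h
  | .disj E _, h => by
      simp only [Shape.substProp, Shape.plain] at h ⊢
      exact SPath.plain_substProp p E' hE' E h
  | .closed _, _ => by simp [Shape.substProp, Shape.plain]

theorem SPath.plain_substProp {ν : Type} (p : PropName) (E' : SPath ν) (hE' : E'.plain) :
    ∀ E : SPath ν, E.plain → (E.substProp p E').plain
  | .prop _, _ => by
      simp only [SPath.substProp]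
      split
      · exact hE'
      · simp [SPath.plain]
  | .inv _, _ => by
      simp only [SPath.substProp]
      split
      · exact SPath.plain_inverse E' hE'
      · simp [SPath.plain]
  | .shapes _ _, h => by simp [SPath.plain] at h
  | .comp E F, h => by
      simp only [SPath.substProp, SPath.plain] at h ⊢
      exact ⟨SPath.plain_substProp p E' hE' E h.1, SPath.plain_substProp p E' hE' F h.2⟩
  | .union E F, h => by
      simp only [SPath.substProp, SPath.plain] at h ⊢
      exact ⟨SPath.plain_substProp p E' hE' E h.1, SPath.plain_substProp p E' hE' F h.2⟩
  | .star E, h => by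
      simp only [SPath.substProp, SPath.plain] at h ⊢
      exact SPath.plain_substProp p E' hE' E h
  | .diff _ _, h => by simp [SPath.plain] at h
end

theorem Target.plain_substCls {ν : Type} (B : ClassName) (ψ : Shape ν) (hψ : ψ.plain)
    (t : Target ν) (h : t.plain) : (t.substCls B ψ).plain := by
  induction t with
  | expr φ s => exact Shape.plain_substCls B ψ hψ φ h
  | and t u iht ihu => exact ⟨iht h.1, ihu h.2⟩
  | or t u iht ihu => exact ⟨iht h.1, ihu h.2⟩
  | not t ih => exact ih h

theorem Target.plain_substProp {ν : Type} (p : PropName) (E' : SPath ν) (hE' : E'.plain)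
    (t : Target ν) (h : t.plain) : (t.substProp p E').plain := by
  induction t with
  | expr φ s => exact Shape.plain_substProp p E' hE' φ h
  | and t u iht ihu => exact ⟨iht h.1, ihu h.2⟩
  | or t u iht ihu => exact ⟨iht h.1, ihu h.2⟩
  | not t ih => exact ih h

theorem SG.plain_substCls {ν : Type} (B : ClassName) (ψ : Shape ν) (hψ : ψ.plain)
    (S : SG ν) (h : S.plain) : (S.substCls B ψ).plain := by
  induction S with
  | normal N =>
    refine ⟨fun c hc => ?_, Target.plain_substCls B ψ hψ _ h.2⟩
    obtain ⟨d, hd, rfl⟩ := List.mem_map.1 hc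
    exact Shape.plain_substCls B ψ hψ _ (h.1 d hd)
  | and S T ihS ihT => exact ⟨ihS h.1, ihT h.2⟩
  | or S T ihS ihT => exact ⟨ihS h.1, ihT h.2⟩
  | not S ih => exact ih h

theorem SG.plain_substProp {ν : Type} (p : PropName) (E' : SPath ν) (hE' : E'.plain)
    (S : SG ν) (h : S.plain) : (S.substProp p E').plain := by
  induction S with
  | normal N =>
    refine ⟨fun c hc => ?_, Target.plain_substProp p E' hE' _ h.2⟩
    obtain ⟨d, hd, rfl⟩ := List.mem_map.1 hc
    exact Shape.plain_substProp p E' hE' _ (h.1 d hd)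
  | and S T ihS ihT => exact ⟨ihS h.1, ihT h.2⟩
  | or S T ihS ihT => exact ⟨ihS h.1, ihT h.2⟩
  | not S ih => exact ih h

theorem SG.plain_applyBasic {ν : Type} (S : SG ν) (hS : S.plain) (β : BasicAction ν)
    (hβ : β.plain) (hdel : ∀ (p : PropName) (E : SPath ν), β ≠ BasicAction.delProp p E) :
    (S.applyBasic β).plain := by
  cases β with
  | addCls B φ =>
    refine SG.plain_substCls B _ ?_ S hS
    simpa [BasicAction.plain, Shape.or, Shape.plain] using hβ
  | delCls B φ =>
    refine SG.plain_substCls B _ ?_ S hS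
    simpa [BasicAction.plain, Shape.plain] using hβ
  | addProp p E =>
    refine SG.plain_substProp p _ ?_ S hS
    simpa [BasicAction.plain, SPath.plain] using hβ
  | delProp p E => exact absurd rfl (hdel p E)

/-! ### Plainness is preserved by regression -/

/-- If `S` is a plain SHACL shapes graph and `α` a sequence of
basic ground actions of the forms `(B ⊕← φ)`, `(B ⊖← φ)`, `(p ⊕← E)` with
plain `φ`, `E`, then `tr_α(S)` contains no path difference `∖` and no shape
properties `(φ₁,φ₂)`, i.e. it is again plain. -/
theorem regression_stays_plain
    (S : SG Node) (hS : S.WF) (hSplain : S.plain)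
    (l : List (BasicAction Node))
    (hl : ∀ β ∈ l, β.WF ∧ β.plain ∧ ∀ (p : PropName) (E : SPath Node),
        β ≠ BasicAction.delProp p E) :
    (tr (UAction.ofList l) S).plain := by
  induction l with
  | nil => simpa [UAction.ofList, tr] using hSplain
  | cons β l ih =>
    have hβ := hl β List.mem_cons_self
    have hrest := ih fun γ hγ => hl γ (List.mem_cons_of_mem β hγ)
    have htr : tr (UAction.ofList (β :: l)) S = (tr (UAction.ofList l) S).applyBasic β := by
      simp only [UAction.ofList, List.foldr_cons, tr]
    rw [htr]
    exact SG.plain_applyBasic _ hrest β hβ.2.1 hβ.2.2
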